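/- Fix n ∈ ℕ, let ε = 2^{−4n} and P_k = (k+1) + ε(k+1)² for 0 ≤ k ≤ 2^n − 1. For 0 ≤ l ≤ n and 0 ≤ i ≤ 2^{n−l} − 1, let N^l_i = {P_k : i·2^l ≤ k ≤ (i+1)·2^l − 1}, and define the average-linkage distance d(X,Y) = (1/(|X||Y|)) ∑_{x∈X, y∈Y} |x − y|. Then for 0 ≤ l ≤ n − 1, any i with 2i + 3 ≤ 2^{n−l} − 1, and any j ≤ i: d(N^l_{2i+2}, N^l_{2i+3}) < d(N^l_{2i+2}, N^{l+1}_j). (The distance from a node to its same-level right neighbor is less than its distance to any higher-level node on its left.) -/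

import Mathlib

/-!
The distance between two nodes lying on different sides of a cut of the line is the difference of
their means (`avgDist_of_le`). Write `m = 2 ^ l`. Shifting an index by `d` moves `pt` by at least
`d` (`add_le_pt_add`), and by at most `d + 1/4` since the quadratic perturbation never exceeds
`ε (2 ^ n) ^ 2 = 2 ^ (-2n) ≤ 1/4` (`pt_add_le`). The right neighbour of a level-`l` node is its
shift by `m`, so it is at distance at most `m + 1/4`. A level-`(l + 1)` node on the left consists
of two runs of `m` points, one at least `2m` and the other at least `m` index steps away, so it is
at distance at least `3m/2`. Finally `m + 1/4 < 3m/2` because `m ≥ 1`.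
-/

/-- `ε = 2^(-4n)`. -/
noncomputable def eps (n : ℕ) : ℝ := ((2 : ℝ) ^ (4 * n))⁻¹

/-- The point `P_k = (k+1) + ε (k+1)^2`. -/
noncomputable def pt (n k : ℕ) : ℝ := ((k : ℝ) + 1) + eps n * ((k : ℝ) + 1) ^ 2

/-- The node `N^l_i = {P_k : i·2^l ≤ k ≤ (i+1)·2^l − 1}` of the complete binary tree. -/
noncomputable def node (n l i : ℕ) : Finset ℝ :=
  (Finset.Icc (i * 2 ^ l) ((i + 1) * 2 ^ l - 1)).image (pt n)

/-- The average-linkage distance between finite sets of reals. -/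
noncomputable def avgDist (X Y : Finset ℝ) : ℝ :=
  (∑ x ∈ X, ∑ y ∈ Y, |x - y|) / ((X.card : ℝ) * (Y.card : ℝ))

theorem eps_pos (n : ℕ) : 0 < eps n := by
  unfold eps; positivity

theorem add_le_pt_add (n k d : ℕ) : pt n k + d ≤ pt n (k + d) := by
  have h : eps n * ((k : ℝ) + 1) ^ 2 ≤ eps n * (((k + d : ℕ) : ℝ) + 1) ^ 2 := by
    have := (eps_pos n).le
    gcongr
    omega
  unfold pt
  push_cast at h ⊢
  linarith

theorem pt_strictMono (n : ℕ) : StrictMono (pt n) :=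
  strictMono_nat_of_lt_succ fun k => by
    have := add_le_pt_add n k 1
    push_cast at this
    linarith

theorem pt_add_le {n k d : ℕ} (hn : 1 ≤ n) (h : k + d + 1 ≤ 2 ^ n) :
    pt n (k + d) ≤ pt n k + d + 1 / 4 := by
  have h2 : (2 : ℝ) ≤ 2 ^ n := by
    simpa using pow_le_pow_right₀ (one_le_two : (1 : ℝ) ≤ 2) hn
  have hk : (((k + d : ℕ) : ℝ) + 1) ≤ 2 ^ n := by exact_mod_cast h
  have he : eps n * ((2 : ℝ) ^ n) ^ 2 ≤ 1 / 4 := by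
    have : eps n * ((2 : ℝ) ^ n) ^ 2 = 1 / ((2 : ℝ) ^ n) ^ 2 := by
      unfold eps
      rw [mul_comm 4 n, pow_mul]
      field_simp
    rw [this]
    apply one_div_le_one_div_of_le <;> nlinarith
  have h3 : eps n * (((k + d : ℕ) : ℝ) + 1) ^ 2 ≤ eps n * ((2 : ℝ) ^ n) ^ 2 := by
    have := (eps_pos n).le
    gcongr
  have h4 : 0 ≤ eps n * ((k : ℝ) + 1) ^ 2 := by
    have := (eps_pos n).le
    positivity
  unfold pt
  push_cast at h3 ⊢
  linarith

theorem node_eq (n l i : ℕ) :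
    node n l i = (Finset.range (2 ^ l)).image fun r => pt n (i * 2 ^ l + r) := by
  have hm : 0 < 2 ^ l := by positivity
  ext x
  simp only [node, Finset.mem_image, Finset.mem_Icc, Finset.mem_range, add_mul, one_mul]
  constructor
  · rintro ⟨k, ⟨h1, h2⟩, rfl⟩
    exact ⟨k - i * 2 ^ l, by omega, by congr 1; omega⟩
  · rintro ⟨r, hr, rfl⟩
    exact ⟨_, ⟨by omega, by omega⟩, rfl⟩

theorem pt_add_injective (n a : ℕ) : Function.Injective fun r => pt n (a + r) :=
  fun _ _ h => Nat.add_left_cancel ((pt_strictMono n).injective h)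

theorem card_node (n l i : ℕ) : (node n l i).card = 2 ^ l := by
  rw [node_eq, Finset.card_image_of_injective _ (pt_add_injective _ _), Finset.card_range]

theorem sum_node (n l i : ℕ) :
    ∑ x ∈ node n l i, x = ∑ r ∈ Finset.range (2 ^ l), pt n (i * 2 ^ l + r) := by
  rw [node_eq, Finset.sum_image (pt_add_injective _ _).injOn]

theorem avgDist_comm (X Y : Finset ℝ) : avgDist X Y = avgDist Y X := by
  unfold avgDist
  rw [Finset.sum_comm, mul_comm]
  simp only [abs_sub_comm]

theorem avgDist_of_le {X Y : Finset ℝ} (h : ∀ x ∈ X, ∀ y ∈ Y, x ≤ y) :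
    avgDist X Y = (X.card * ∑ y ∈ Y, y - Y.card * ∑ x ∈ X, x) / ((X.card : ℝ) * Y.card) := by
  unfold avgDist
  congr 1
  have : ∑ x ∈ X, ∑ y ∈ Y, |x - y| = ∑ x ∈ X, ∑ y ∈ Y, (y - x) :=
    Finset.sum_congr rfl fun x hx => Finset.sum_congr rfl fun y hy => by
      rw [abs_sub_comm, abs_of_nonneg (sub_nonneg.2 (h x hx y hy))]
  rw [this]
  simp [Finset.sum_sub_distrib, Finset.mul_sum]

theorem node_le_node {n l i l' i' : ℕ} (h : (i + 1) * 2 ^ l ≤ i' * 2 ^ l') :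
    ∀ x ∈ node n l i, ∀ y ∈ node n l' i', x ≤ y := by
  intro x hx y hy
  simp only [node, Finset.mem_image, Finset.mem_Icc] at hx hy
  obtain ⟨a, ha, rfl⟩ := hx
  obtain ⟨b, hb, rfl⟩ := hy
  exact (pt_strictMono n).monotone (by omega)

theorem avgDist_same_level_right_lt_higher_level_left (n l i j : ℕ)
    (hl : l + 1 ≤ n) (hi : 2 * i + 3 + 1 ≤ 2 ^ (n - l)) (hj : j ≤ i) :
    avgDist (node n l (2 * i + 2)) (node n l (2 * i + 3)) <
      avgDist (node n l (2 * i + 2)) (node n (l + 1) j) := by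
  have hsep : (j + 1) * 2 ^ (l + 1) ≤ (2 * i + 2) * 2 ^ l := by
    rw [pow_succ]
    nlinarith [Nat.mul_le_mul_right (2 ^ l) hj]
  have htop : (2 * i + 4) * 2 ^ l ≤ 2 ^ n := by
    calc (2 * i + 4) * 2 ^ l ≤ 2 ^ (n - l) * 2 ^ l := Nat.mul_le_mul_right _ hi
      _ = 2 ^ n := by rw [← pow_add]; congr 1; omega
  rw [avgDist_comm _ (node n (l + 1) j), avgDist_of_le (node_le_node le_rfl),
    avgDist_of_le (node_le_node hsep)]
  simp only [card_node, sum_node]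
  rw [pow_succ, mul_two] at hsep ⊢
  have hm : 1 ≤ 2 ^ l := Nat.one_le_two_pow
  generalize 2 ^ l = m at *
  obtain ⟨a, ha⟩ : ∃ a, a = (2 * i + 2) * m := ⟨_, rfl⟩
  obtain ⟨b, hb⟩ : ∃ b, b = j * (m + m) := ⟨_, rfl⟩
  rw [show (2 * i + 3) * m = a + m by rw [ha]; ring, ← ha, ← hb, Finset.sum_range_add]
  replace htop : a + m + m ≤ 2 ^ n := by rw [ha]; linarith
  replace hsep : b + m + m ≤ a := by rw [ha, hb]; linarith
  have hY : ∑ r ∈ Finset.range m, pt n (a + m + r) ≤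
      ∑ r ∈ Finset.range m, pt n (a + r) + m * (m + 1 / 4) := by
    have : ∀ r ∈ Finset.range m, pt n (a + m + r) ≤ pt n (a + r) + (m + 1 / 4) := by
      intro r hr
      have hr := Finset.mem_range.1 hr
      have := pt_add_le (n := n) (k := a + r) (d := m) (by omega) (by omega)
      rw [add_right_comm a m r]
      linarith
    simpa [Finset.sum_add_distrib, mul_add] using Finset.sum_le_sum this
  -- A run of `m` points starting at least `c` index steps before `a`.
  have hZ : ∀ b' c : ℕ, b' + c ≤ a → ∑ r ∈ Finset.range m, pt n (b' + r) + m * c ≤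
      ∑ r ∈ Finset.range m, pt n (a + r) := by
    intro b' c hc
    have : ∀ r ∈ Finset.range m, pt n (b' + r) + c ≤ pt n (a + r) := fun r _ =>
      (add_le_pt_add n _ c).trans ((pt_strictMono n).monotone (by omega))
    simpa [Finset.sum_add_distrib] using Finset.sum_le_sum this
  have hZ1 := hZ b (m + m) (by omega)
  have hZ2 := hZ (b + m) m (by omega)
  simp only [add_assoc] at *
  have hmR : (1 : ℝ) ≤ m := by exact_mod_cast hm
  push_cast at *
  generalize ∑ r ∈ Finset.range m, pt n (a + r) = X at *
  generalize ∑ r ∈ Finset.range m, pt n (a + (m + r)) = Y at *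
  generalize ∑ r ∈ Finset.range m, pt n (b + r) = Z₁ at *
  generalize ∑ r ∈ Finset.range m, pt n (b + (m + r)) = Z₂ at *
  generalize (m : ℝ) = t at *
  have e1 : (t * Y - t * X) / (t * t) = (Y - X) / t := by field_simp
  have e2 : ((t + t) * X - t * (Z₁ + Z₂)) / ((t + t) * t) = ((2 * X - Z₁ - Z₂) / 2) / t := by
    field_simp
    ring
  rw [e1, e2]
  gcongr
  nlinarith
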